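/- The kneading group K is self-replicating: for every word v ∈ ℤ* and every g ∈ K there exists h ∈ K whose section at v satisfies h|_v = g. -/

import Mathlib

/-- States of the kneading automaton: `a i` is the paper's `a_{i+1}` (for `i < k`),
`b i` is the paper's `b_{i+1}` (for `i < p`), and `id` is the identity state. -/
inductive KState : Type
  | a (i : ℕ)
  | b (i : ℕ)
  | id
  deriving DecidableEq

/-- Transition function of the kneading automaton `𝒦(x₁…x_k, y₁…y_p)`, where the paper's
`x_i` is `x (i-1)` and `y_i` is `y (i-1)`.  `KTrans k p x y s z = (output letter, restriction)`. -/
def KTrans (k p : ℕ) (x y : ℕ → ℤ) : KState → ℤ → ℤ × KState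
  | .a 0, z => (z + 1, .id)
  | .a (i+1), z => if z = x i then (z, .a i) else (z, .id)
  | .b 0, z =>
      if z = x (k-1) then (z, .a (k-1))
      else if z = y (p-1) then (z, .b (p-1))
      else (z, .id)
  | .b (i+1), z => if z = y i then (z, .b i) else (z, .id)
  | .id, z => (z, .id)

/-- The action of a state on the tree `ℤ*` of finite words over `ℤ`,
defined recursively by `q(zv) = q(z)·(q|_z)(v)`. -/
def stateAct (k p : ℕ) (x y : ℕ → ℤ) : KState → List ℤ → List ℤ
  | _, [] => []
  | s, z :: v => (KTrans k p x y s z).1 :: stateAct k p x y (KTrans k p x y s z).2 v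

/-- The generating states `S = {a₁,…,a_k, b₁,…,b_p}`. -/
def IsGen (k p : ℕ) (s : KState) : Prop :=
  (∃ i, i < k ∧ s = .a i) ∨ (∃ j, j < p ∧ s = .b j)

/-- The generators of the kneading group, as permutations of `List ℤ` whose underlying
function is the action of a generating state. -/
def SGens (k p : ℕ) (x y : ℕ → ℤ) : Set (Equiv.Perm (List ℤ)) :=
  {g | ∃ s : KState, IsGen k p s ∧ ⇑g = stateAct k p x y s}

/-- The kneading group `K = 𝕂(x₁…x_k, y₁…y_p)`. -/
def Kgroup (k p : ℕ) (x y : ℕ → ℤ) : Subgroup (Equiv.Perm (List ℤ)) :=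
  Subgroup.closure (SGens k p x y)

theorem KTrans_bij (k p : ℕ) (x y : ℕ → ℤ) (s : KState) :
    Function.Bijective (fun z => (KTrans k p x y s z).1) := by
  by_cases h : s = .a 0
  · subst h
    exact (Equiv.addRight (1 : ℤ)).bijective
  · have : (fun z => (KTrans k p x y s z).1) = _root_.id := by
      funext z
      rcases s with (_ | i) | (_ | i) | _
      · exact absurd rfl h
      all_goals simp only [KTrans, id_eq]
      all_goals split_ifs <;> rfl
    rw [this]
    exact Function.bijective_id

theorem stateAct_bij (k p : ℕ) (x y : ℕ → ℤ) (s : KState) :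
    Function.Bijective (stateAct k p x y s) := by
  constructor
  · intro u
    induction u generalizing s with
    | nil => intro v h; cases v <;> simp_all [stateAct]
    | cons z u ih =>
      intro v h
      cases v with
      | nil => simp [stateAct] at h
      | cons z' v =>
        simp only [stateAct, List.cons.injEq] at h
        obtain ⟨h1, h2⟩ := h
        have := (KTrans_bij k p x y s).1 h1
        subst this
        rw [ih _ h2]
  · intro u
    induction u generalizing s with
    | nil => exact ⟨[], rfl⟩
    | cons z u ih =>
      obtain ⟨z', hz⟩ := (KTrans_bij k p x y s).2 z
      obtain ⟨v, hv⟩ := ih (KTrans k p x y s z').2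
      refine ⟨z' :: v, ?_⟩
      simp only [stateAct, hv]
      simpa using hz

theorem stateAct_id (k p : ℕ) (x y : ℕ → ℤ) (w : List ℤ) :
    stateAct k p x y .id w = w := by
  induction w with
  | nil => rfl
  | cons z w ih => simp [stateAct, KTrans, ih]

theorem gen_mem (k p : ℕ) (x y : ℕ → ℤ) (s : KState) (hs : IsGen k p s) :
    ∃ g ∈ Kgroup k p x y, ∀ w, g w = stateAct k p x y s w :=
  ⟨Equiv.ofBijective _ (stateAct_bij k p x y s),
    Subgroup.subset_closure ⟨s, hs, rfl⟩, fun _ => rfl⟩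

theorem parent (k p : ℕ) (x y : ℕ → ℤ) (hp : 1 ≤ p)
    (hxy : x (k - 1) ≠ y (p - 1)) (s : KState) (hs : IsGen k p s) :
    ∃ t z, IsGen k p t ∧ KTrans k p x y t z = (z, s) := by
  rcases hs with ⟨i, hi, rfl⟩ | ⟨i, hi, rfl⟩
  · by_cases h : i + 1 < k
    · exact ⟨.a (i + 1), x i, Or.inl ⟨_, h, rfl⟩, by simp [KTrans]⟩
    · have : i = k - 1 := by omega
      subst this
      exact ⟨.b 0, x (k - 1), Or.inr ⟨0, hp, rfl⟩, by simp [KTrans]⟩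
  · by_cases h : i + 1 < p
    · exact ⟨.b (i + 1), y i, Or.inr ⟨_, h, rfl⟩, by simp [KTrans]⟩
    · have : i = p - 1 := by omega
      subst this
      exact ⟨.b 0, y (p - 1), Or.inr ⟨0, hp, rfl⟩, by simp [KTrans, hxy.symm]⟩

theorem shift (k p : ℕ) (hk : 1 ≤ k) (x y : ℕ → ℤ) (z z' : ℤ) :
    ∃ g ∈ Kgroup k p x y, ∀ w, g (z :: w) = z' :: w := by
  obtain ⟨a, ha, haw⟩ := gen_mem k p x y (.a 0) (Or.inl ⟨0, hk, rfl⟩)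
  have h1 : ∀ z w, a (z :: w) = (z + 1) :: w := by
    intro z w
    rw [haw]
    simp [stateAct, KTrans, stateAct_id]
  have hn : ∀ (n : ℕ) z w, (a ^ n) (z :: w) = (z + n) :: w := by
    intro n
    induction n with
    | zero => simp
    | succ n ih =>
      intro z w
      rw [pow_succ, Equiv.Perm.mul_apply, h1, ih]
      push_cast
      congr 1
      ring
  rcases le_total z z' with h | h
  · refine ⟨a ^ (z' - z).toNat, pow_mem ha _, fun w => ?_⟩
    rw [hn]
    congr 1
    omega
  · refine ⟨(a ^ (z - z').toNat)⁻¹, inv_mem (pow_mem ha _), fun w => ?_⟩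
    rw [Equiv.Perm.inv_eq_iff_eq, hn]
    congr 1
    omega

theorem one_letter (k p : ℕ) (hk : 1 ≤ k) (hp : 1 ≤ p) (x y : ℕ → ℤ)
    (hxy : x (k - 1) ≠ y (p - 1)) (z : ℤ) (g : Equiv.Perm (List ℤ))
    (hg : g ∈ Kgroup k p x y) :
    ∃ h ∈ Kgroup k p x y, ∀ w, h (z :: w) = z :: g w := by
  induction hg using Subgroup.closure_induction with
  | mem g hg =>
    obtain ⟨s, hs, hgs⟩ := hg
    obtain ⟨t, z0, ht, htz⟩ := parent k p x y hp hxy s hs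
    obtain ⟨b, hb, hbw⟩ := gen_mem k p x y t ht
    obtain ⟨c, hc, hcw⟩ := shift k p hk x y z z0
    obtain ⟨d, hd, hdw⟩ := shift k p hk x y z0 z
    refine ⟨d * (b * c), mul_mem hd (mul_mem hb hc), fun w => ?_⟩
    rw [Equiv.Perm.mul_apply, Equiv.Perm.mul_apply, hcw, hbw, stateAct, htz, hdw, hgs]
  | one => exact ⟨1, one_mem _, fun w => rfl⟩
  | mul g g' _ _ ih ih' =>
    obtain ⟨h, hh, e⟩ := ih
    obtain ⟨h', hh', e'⟩ := ih'
    refine ⟨h * h', mul_mem hh hh', fun w => ?_⟩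
    rw [Equiv.Perm.mul_apply, e', e, Equiv.Perm.mul_apply]
  | inv g _ ih =>
    obtain ⟨h, hh, e⟩ := ih
    refine ⟨h⁻¹, inv_mem hh, fun w => ?_⟩
    rw [Equiv.Perm.inv_eq_iff_eq, e, ← Equiv.Perm.mul_apply, mul_inv_cancel, Equiv.Perm.one_apply]

theorem K_nil (k p : ℕ) (x y : ℕ → ℤ) (g : Equiv.Perm (List ℤ))
    (hg : g ∈ Kgroup k p x y) : g [] = [] := by
  induction hg using Subgroup.closure_induction with
  | mem g hg =>
    obtain ⟨s, hs, hgs⟩ := hg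
    rw [hgs, stateAct]
  | one => rfl
  | mul g g' _ _ ih ih' => rw [Equiv.Perm.mul_apply, ih', ih]
  | inv g _ ih => rw [Equiv.Perm.inv_eq_iff_eq, ih]

theorem stmt8 (k p : ℕ) (hk : 1 ≤ k) (hp : 1 ≤ p) (x y : ℕ → ℤ)
    (hxy : x (k - 1) ≠ y (p - 1)) :
    ∀ v : List ℤ, ∀ g ∈ Kgroup k p x y, ∃ h ∈ Kgroup k p x y,
      ∀ w : List ℤ, h (v ++ w) = h v ++ g w := by
  intro v
  induction v with
  | nil =>
    intro g hg
    exact ⟨g, hg, fun w => by rw [K_nil k p x y g hg]; rfl⟩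
  | cons z v ih =>
    intro g hg
    obtain ⟨h', hh', e'⟩ := ih g hg
    obtain ⟨h, hh, e⟩ := one_letter k p hk hp x y hxy z h' hh'
    refine ⟨h, hh, fun w => ?_⟩
    rw [List.cons_append, e, e, e', List.cons_append]
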